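/- Let n > 1, let p₀,...,p_l be pairwise distinct primes, p = p₀⋯p_l, and let a ∈ ℕ satisfy a ≡ pᵢ − dᵢ (mod pᵢ²) for each i ∈ {0,...,l} (with d₀ = 0 and d₀ < d₁ < ... < d_l < pᵢ for all i). Then for every non-negative integer k and every i, the polynomial x^n + k·p·x + a + dᵢ is irreducible over ℤ (by Eisenstein's criterion at pᵢ). -/

import Mathlib

open Polynomial

theorem eisenstein_progression_irreducible (n : ℕ) (hn : 1 < n) (l : ℕ)
    (ps : Fin (l + 1) → ℕ) (hps : Function.Injective ps) (hprime : ∀ i, (ps i).Prime)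
    (d : Fin (l + 1) → ℕ) (hd0 : d 0 = 0) (hmono : StrictMono d)
    (hdlt : ∀ i j : Fin (l + 1), (d i : ℤ) < ps j)
    (a : ℕ) (ha : ∀ i, (a : ℤ) ≡ (ps i : ℤ) - d i [ZMOD (ps i : ℤ) ^ 2]) :
    ∀ (k : ℕ) (i : Fin (l + 1)),
      Irreducible (X ^ n + C ((k : ℤ) * ∏ j, (ps j : ℤ)) * X + C ((a : ℤ) + d i)) := by
  intro k i
  set b : ℤ := (k : ℤ) * ∏ j, (ps j : ℤ) with hb
  have hpZ : Prime (ps i : ℤ) := Nat.prime_iff_prime_int.mp (hprime i)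
  have hbd : (ps i : ℤ) ∣ b :=
    Dvd.dvd.mul_left (Finset.dvd_prod_of_mem (fun j => (ps j : ℤ)) (Finset.mem_univ i)) _
  obtain ⟨c, hc⟩ := (ha i).symm.dvd
  have hcd : (a : ℤ) + d i = ps i * (1 + ps i * c) := by linear_combination hc
  have hlow : (C b * X + C ((a : ℤ) + d i)).degree < (n : WithBot ℕ) :=
    lt_of_le_of_lt degree_linear_le (by exact_mod_cast hn)
  rw [add_assoc]
  have hmonic : (X ^ n + (C b * X + C ((a : ℤ) + d i))).Monic := monic_X_pow_add hlow
  have hdeg : (X ^ n + (C b * X + C ((a : ℤ) + d i))).degree = (n : WithBot ℕ) := by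
    rw [degree_add_eq_left_of_degree_lt (by rwa [degree_X_pow]), degree_X_pow]
  refine irreducible_of_eisenstein_criterion (P := Ideal.span {(ps i : ℤ)})
    ((Ideal.span_singleton_prime hpZ.ne_zero).mpr hpZ) ?_ ?_ ?_ ?_ hmonic.isPrimitive
  · rw [hmonic.leadingCoeff, Ideal.mem_span_singleton]
    exact hpZ.not_dvd_one
  · intro m hm
    rw [hdeg] at hm
    have hm' : m ≠ n := by
      have : m < n := by exact_mod_cast hm
      omega
    rw [Ideal.mem_span_singleton, coeff_add, coeff_X_pow, if_neg hm', zero_add, coeff_add,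
      coeff_C_mul, coeff_C]
    refine dvd_add (hbd.mul_right _) ?_
    split_ifs
    · exact ⟨_, hcd⟩
    · exact dvd_zero _
  · rw [hdeg]
    exact_mod_cast (by omega : 0 < n)
  · rw [Ideal.span_singleton_pow, Ideal.mem_span_singleton]
    have h0 : (X ^ n + (C b * X + C ((a : ℤ) + d i))).coeff 0 = (a : ℤ) + d i := by
      rw [coeff_add, coeff_X_pow, if_neg (by omega), coeff_add, coeff_C_mul, coeff_X_zero,
        coeff_C_zero]
      ring
    rw [h0, hcd, pow_two, mul_dvd_mul_iff_left hpZ.ne_zero]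
    intro h
    exact hpZ.not_dvd_one ((dvd_add_left (dvd_mul_right _ _)).mp h)
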